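/- arXiv:1604.04719 — 4 statements merged into one kernel-verified Lean document; each statement's English description precedes it below -/
import Mathlib

section
/- Let n > n₁ ≥ 2 and m > m₁ ≥ 2 be integers with F_n - F_{n₁} = T_m - T_{m₁}. Then |((α^{n-n₁} - 1)/(√5·c_α·(α_T^{m-m₁} - 1)))·α^{n₁}·α_T^{-m₁} - 1| < 1.64·α^{4-n}, where α = (1+√5)/2, α_T is the unique real root of x³ - x² - x - 1, and c_α = 1/(-α_T² + 4α_T - 1). -/
/-- The Tribonacci sequence: T 0 = 0, T 1 = T 2 = 1,
    T (k+3) = T (k+2) + T (k+1) + T k. -/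
def trib : ℕ → ℤ
  | 0 => 0
  | 1 => 1
  | 2 => 1
  | n + 3 => trib (n + 2) + trib (n + 1) + trib n

lemma trib_aux (t c : ℝ) (ht : t ^ 3 - t ^ 2 - t - 1 = 0) (hc : c * (-t ^ 2 + 4 * t - 1) = 1)
    (k : ℕ) :
    ((trib (k+2) : ℝ) - c * t ^ (k+2)) + (t - 1) * ((trib (k+1) : ℝ) - c * t ^ (k+1))
      + (t^2 - t - 1) * ((trib k : ℝ) - c * t ^ k) = 0 := by
  have h1 : (trib (k+2) : ℝ) + (t - 1) * (trib (k+1) : ℝ) + (t^2 - t - 1) * (trib k : ℝ)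
      = t ^ (k+1) := by
    induction k with
    | zero => simp [trib]
    | succ k ih =>
      have : trib (k+1+2) = trib (k+2) + trib (k+1) + trib k := rfl
      rw [this, pow_succ t (k+1), ← ih]
      have h' : trib (k+1+1) = trib (k+2) := rfl
      rw [h']
      push_cast
      linear_combination (-(trib k : ℝ)) * ht
  have h2 : t ^ (k+2) = t ^ k * t^2 := pow_add _ _ _
  have h3 : t ^ (k+1) = t ^ k * t := pow_succ _ _
  rw [h3] at h1
  rw [h2, h3]
  linear_combination h1 - t * t^k * hc - c * t^k * ht

lemma base_aux (t s x y : ℝ) (l : 1.839 < t) (u : t < 1.8393) (sl : 0.542 < s) (su : s < 0.5438)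
    (a1 : -0.1381 ≤ x) (a2 : x ≤ -0.136) (b1 : -0.0935 ≤ y) (b2 : y ≤ -0.089) :
    y^2 + (t-1) * x * y + s * x^2 ≤ 0.033 := by
  have p1 : y^2 ≤ 0.0935^2 := by
    rw [← neg_sq y]; exact pow_le_pow_left₀ (by linarith) (by linarith) 2
  have p2 : x^2 ≤ 0.1381^2 := by
    rw [← neg_sq x]; exact pow_le_pow_left₀ (by linarith) (by linarith) 2
  have p3 : (-x) * (-y) ≤ 0.1381 * 0.0935 :=
    mul_le_mul (by linarith) (by linarith) (by linarith) (by norm_num)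
  have p4 : 0 ≤ (-x) * (-y) := mul_nonneg (by linarith) (by linarith)
  have p5 : (t-1) * ((-x) * (-y)) ≤ 0.8393 * (0.1381 * 0.0935) :=
    mul_le_mul (by linarith) p3 p4 (by norm_num)
  have p6 : s * x^2 ≤ 0.5438 * 0.1381^2 :=
    mul_le_mul (by linarith) p2 (sq_nonneg x) (by norm_num)
  norm_num at *
  linarith

lemma trib_err (t c : ℝ) (ht : t ^ 3 - t ^ 2 - t - 1 = 0) (hc : c * (-t ^ 2 + 4 * t - 1) = 1)
    (l : 1.839 < t) (u : t < 1.8393) (cl : 0.336 < c) (cu : c < 0.3364)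
    (k : ℕ) (hk : 2 ≤ k) : |(trib k : ℝ) - c * t ^ k| ≤ 0.3 := by
  set e : ℕ → ℝ := fun k => (trib k : ℝ) - c * t ^ k with he
  have hrec : ∀ k, e (k+2) + (t-1) * e (k+1) + (t^2-t-1) * e k = 0 := trib_aux t c ht hc
  have sl : 0.542 < t^2-t-1 := by nlinarith
  have su : t^2-t-1 < 0.5438 := by nlinarith
  have hQ : ∀ j, e (j+3)^2 + (t-1) * e (j+2) * e (j+3) + (t^2-t-1) * e (j+2)^2 ≤ 0.033 := by
    intro j
    induction j with
    | zero =>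
      have e2 : e 2 = 1 - c * t^2 := by simp [he, trib]
      have e3 : e 3 = 2 - c * t^3 := by simp [he, trib]
      have t2l : 3.381 < t^2 := by nlinarith
      have t2u : t^2 < 3.3831 := by nlinarith
      have t3 : t^3 = t^2 + t + 1 := by linarith
      have a1 : -0.1381 ≤ e 2 := by rw [e2]; nlinarith
      have a2 : e 2 ≤ -0.136 := by rw [e2]; nlinarith
      have b1 : -0.0935 ≤ e 3 := by rw [e3, t3]; nlinarith
      have b2 : e 3 ≤ -0.089 := by rw [e3, t3]; nlinarith
      exact base_aux t _ _ _ l u sl su a1 a2 b1 b2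
    | succ j ih =>
      have r := hrec (j+2)
      have key : e (j+1+3)^2 + (t-1) * e (j+1+2) * e (j+1+3) + (t^2-t-1) * e (j+1+2)^2
        = (t^2-t-1) * (e (j+3)^2 + (t-1) * e (j+2) * e (j+3) + (t^2-t-1) * e (j+2)^2) := by
        have : e (j+1+3) = -(t-1) * e (j+3) - (t^2-t-1) * e (j+2) := by
          have : e (j+2+2) = e (j+1+3) := rfl
          have : e (j+2+1) = e (j+3) := rfl
          linarith
        have h' : e (j+1+2) = e (j+3) := rfl
        rw [this, h']; ring
      rw [key]
      generalize e (j+3)^2 + (t-1) * e (j+2) * e (j+3) + (t^2-t-1) * e (j+2)^2 = q at ih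
      clear key r
      generalize t^2-t-1 = s at sl su
      by_cases hq : 0 ≤ q
      · have := mul_le_mul_of_nonneg_right su.le hq
        linarith
      · have : s * q ≤ 0 := mul_nonpos_of_nonneg_of_nonpos (by linarith) (by linarith)
        linarith
  obtain ⟨j, rfl⟩ := Nat.exists_eq_add_of_le' hk
  have q := hQ j
  change |e (j+2)| ≤ 0.3
  apply abs_le_of_sq_le_sq ?_ (show (0:ℝ) ≤ 0.3 by norm_num)
  have hd : 0.366 ≤ (t^2-t-1) - (t-1)^2/4 := by nlinarith
  nlinarith [sq_nonneg (e (j+3) + (t-1)/2 * e (j+2)), sq_nonneg (e (j+2))]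

set_option maxHeartbeats 2000000 in
theorem fib_trib_linear_form_three (α αT cα : ℝ)
    (hα : α = (1 + Real.sqrt 5) / 2)
    (hroot : αT ^ 3 - αT ^ 2 - αT - 1 = 0)
    (huniq : ∀ x : ℝ, x ^ 3 - x ^ 2 - x - 1 = 0 → x = αT)
    (hcα : cα = 1 / (-αT ^ 2 + 4 * αT - 1))
    (n m n₁ m₁ : ℕ) (hn₁ : 2 ≤ n₁) (hn : n₁ < n) (hm₁ : 2 ≤ m₁) (hm : m₁ < m)
    (h : (Nat.fib n : ℤ) - Nat.fib n₁ = trib m - trib m₁) :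
    |((α ^ (n - n₁) - 1) / (Real.sqrt 5 * cα * (αT ^ (m - m₁) - 1))) *
        α ^ n₁ * αT ^ (-(m₁ : ℤ)) - 1| <
      1.64 * α ^ (4 - (n : ℤ)) := by
  have l : 1.839 < αT := by
    by_contra hh
    push Not at hh
    nlinarith [sq_nonneg (αT + 0.42), sq_nonneg αT]
  have u : αT < 1.8393 := by
    by_contra hh
    push Not at hh
    nlinarith [sq_nonneg (αT + 0.42), sq_nonneg αT]
  have dl : 2.9734 < -αT ^ 2 + 4 * αT - 1 := by nlinarith
  have du : -αT ^ 2 + 4 * αT - 1 < 2.9754 := by nlinarith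
  have hc : cα * (-αT ^ 2 + 4 * αT - 1) = 1 := by
    rw [hcα]; exact one_div_mul_cancel (by linarith)
  have cl : 0.336 < cα := by
    rw [hcα, lt_div_iff₀ (by linarith)]; linarith
  have cu : cα < 0.3364 := by
    rw [hcα, div_lt_iff₀ (by linarith)]; linarith
  have E1 := trib_err αT cα hroot hc l u cl cu m (by omega)
  have E2 := trib_err αT cα hroot hc l u cl cu m₁ hm₁
  have s5 : Real.sqrt 5 ^ 2 = 5 := Real.sq_sqrt (by norm_num)
  have s0 : 0 ≤ Real.sqrt 5 := Real.sqrt_nonneg 5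
  have sl : 2.236 < Real.sqrt 5 := by nlinarith
  have su : Real.sqrt 5 < 2.2361 := by nlinarith
  have hφ : α = Real.goldenRatio := hα
  have hψ : Real.goldenConj = 1 - α := by rw [hφ]; linarith [Real.goldenRatio_add_goldenConj]
  have F : ∀ k, (Nat.fib k : ℝ) * √5 = α ^ k - (1 - α) ^ k := by
    intro k
    rw [Real.coe_fib_eq, ← hψ, ← hφ]; field_simp
  have αl : 1.618 < α := by rw [hα]; linarith
  have αu : α < 1.61806 := by rw [hα]; linarith
  have hα2 : α ^ 2 = α + 1 := by rw [hα]; nlinarith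
  have B : ∀ k, 2 ≤ k → |(1 - α) ^ k| ≤ 0.3821 := by
    intro k hk
    rw [abs_pow]
    have h0 : |1 - α| ≤ 0.61806 := by rw [abs_le]; constructor <;> linarith
    calc |1 - α| ^ k ≤ |1 - α| ^ 2 := pow_le_pow_of_le_one (abs_nonneg _) (by linarith) hk
      _ ≤ 0.61806 ^ 2 := by gcongr
      _ ≤ _ := by norm_num
  have B3 : |(1 - α) ^ n| ≤ 0.2362 := by
    rw [abs_pow]
    have h0 : |1 - α| ≤ 0.61806 := by rw [abs_le]; constructor <;> linarith
    calc |1 - α| ^ n ≤ |1 - α| ^ 3 :=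
          pow_le_pow_of_le_one (abs_nonneg _) (by linarith) (by omega)
      _ ≤ 0.61806 ^ 3 := by gcongr
      _ ≤ _ := by norm_num
  have B1 := B n₁ hn₁
  have hR : (Nat.fib n : ℝ) - Nat.fib n₁ = trib m - trib m₁ := by exact_mod_cast h
  obtain ⟨a, rfl⟩ := Nat.exists_eq_add_of_lt hn
  obtain ⟨b, rfl⟩ := Nat.exists_eq_add_of_lt hm
  have hPa : α ^ (n₁ + a + 1) = α ^ n₁ * α ^ (a+1) := by rw [add_assoc, pow_add]
  have hTb : αT ^ (m₁ + b + 1) = αT ^ m₁ * αT ^ (b+1) := by rw [add_assoc, pow_add]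
  have hA1 : α ≤ α ^ (a+1) := le_self_pow₀ (by linarith) (by omega)
  have hB1 : αT ≤ αT ^ (b+1) := le_self_pow₀ (by linarith) (by omega)
  have hT2 : αT ^ 2 ≤ αT ^ m₁ := pow_le_pow_right₀ (by linarith) hm₁
  have hP0 : 0 < α ^ n₁ := by positivity
  have hT0 : 0 < αT ^ m₁ := by positivity
  have t2l : 3.381 < αT^2 := by nlinarith
  have hFn := F (n₁ + a + 1)
  have hFn1 := F n₁
  -- X·√5 and Y
  set X := α ^ n₁ * (α ^ (a+1) - 1) with hX
  set Y := cα * (αT ^ m₁ * (αT ^ (b+1) - 1)) with hY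
  have hZ : 2.83 ≤ αT ^ m₁ * (αT ^ (b+1) - 1) := by
    have := mul_le_mul (show (3.381:ℝ) ≤ αT ^ m₁ by linarith)
      (show (0.839:ℝ) ≤ αT ^ (b+1) - 1 by linarith) (by norm_num) hT0.le
    linarith
  have hYl : 0.95 ≤ Y := by 
    have := mul_le_mul cl.le hZ (by norm_num) (by linarith)
    linarith
  have hD : |X - √5 * Y| ≤ 1.97 := by
    have e1 : X - √5 * Y = ((1-α)^(n₁+a+1) - (1-α)^n₁)
        + √5 * ((((trib (m₁+b+1) : ℤ) : ℝ) - cα * αT ^ (m₁+b+1)) - ((trib m₁ : ℝ) - cα * αT ^ m₁)) := by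
      rw [hX, hY, hTb]
      rw [hPa] at hFn
      linear_combination √5 * hR - hFn + hFn1
    rw [e1]
    refine (abs_add_le _ _).trans ?_
    rw [abs_mul, abs_of_nonneg s0]
    have q1 := abs_sub ((1-α)^(n₁+a+1)) ((1-α)^n₁)
    have q2 := abs_sub ((((trib (m₁+b+1) : ℤ) : ℝ) - cα * αT ^ (m₁+b+1))) ((trib m₁ : ℝ) - cα * αT ^ m₁)
    have q3 := mul_le_mul su.le (q2.trans (add_le_add E1 E2)) (abs_nonneg _) (by norm_num)
    linarith
  have hXP : α ^ (n₁+a+1) ≤ α^2 * X := by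
    rw [hPa, hX]
    have : α ^ (a+1) ≤ α^2 * (α^(a+1) - 1) := by
      rw [hα2]
      have := mul_le_mul_of_nonneg_left hA1 (show 0 ≤ α by linarith)
      linarith
    have := mul_le_mul_of_nonneg_left this hP0.le
    linarith
  have hval : (α ^ (n₁ + a + 1 - n₁) - 1) / (√5 * cα * (αT ^ (m₁ + b + 1 - m₁) - 1)) * α ^ n₁ *
      αT ^ (-(m₁:ℤ)) - 1 = (X - √5 * Y) / (√5 * Y) := by
    have i1 : n₁ + a + 1 - n₁ = a + 1 := by omega
    have i2 : m₁ + b + 1 - m₁ = b + 1 := by omega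
    have hb : αT ^ (b+1) - 1 ≠ 0 := by linarith
    rw [i1, i2, zpow_neg, zpow_natCast, hX, hY]
    have : √5 ≠ 0 := by linarith
    have : cα ≠ 0 := by linarith
    have := hT0.ne'
    field_simp
  have hrhs : (1.64:ℝ) * α ^ (4 - ((n₁+a+1 : ℕ):ℤ)) = 1.64 * α^4 / α ^ (n₁+a+1) := by
    rw [zpow_sub₀ (by linarith), zpow_natCast]
    norm_cast
    ring
  rw [hval, hrhs, abs_div, abs_of_pos (show 0 < √5 * Y by positivity),
    div_lt_div_iff₀ (by positivity) (by positivity)]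
  have hXu : X ≤ √5 * Y + 1.97 := by linarith [(abs_le.mp hD).2]
  have hW : 2.124 ≤ √5 * Y := by
    have := mul_le_mul sl.le hYl (by norm_num) s0
    linarith
  have hX0 : 0 < X := by rw [hX]; apply mul_pos hP0; linarith
  calc |X - √5 * Y| * α ^ (n₁+a+1) ≤ 1.97 * (α^2 * X) := by gcongr
    _ = α^2 * (1.97 * X) := by ring
    _ < α^2 * (1.64 * (α^2 * (√5 * Y))) := by
      have : 1.97 * X < 1.64 * (α^2 * (√5 * Y)) := by
        rw [hα2]
        have := mul_le_mul_of_nonneg_right (show (2.618:ℝ) ≤ α + 1 by linarith) (show 0 ≤ √5 * Y by linarith)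
        linarith
      gcongr
    _ = _ := by ring
end

section
/- For all positive integers n and m, α^n ≠ √5·c_α·α_T^m, where α = (1+√5)/2, α_T is the unique real root of x³ - x² - x - 1, and c_α = 1/(-α_T² + 4α_T - 1). (Equivalently, the quantity (√5·c_α)^{-1}·α^n·α_T^{-m} - 1 never vanishes.) -/
open Polynomial in
lemma tri_irred : Irreducible (X ^ 3 - X ^ 2 - X - 1 : ℚ[X]) := by
  have hd : (X ^ 3 - X ^ 2 - X - 1 : ℚ[X]).natDegree = 3 := by compute_degree!
  rw [Polynomial.irreducible_iff_roots_eq_zero_of_degree_le_three (by omega) (by omega)]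
  rw [Multiset.eq_zero_iff_forall_notMem]
  intro r hr
  have h := (Polynomial.mem_roots'.1 hr).2
  simp only [IsRoot.def, eval_sub, eval_pow, eval_X, eval_one] at h
  have hint : IsIntegral ℤ r := by
    refine ⟨X ^ 3 - X ^ 2 - X - 1, by monicity!, ?_⟩
    simpa using h
  obtain ⟨z, hz⟩ := IsIntegrallyClosed.isIntegral_iff.1 hint
  have hz' : (z : ℚ) = r := by simpa using hz
  rw [← hz'] at h
  have h2 : z * (z ^ 2 - z - 1) = 1 := by
    have : z ^ 3 - z ^ 2 - z - 1 = 0 := by exact_mod_cast h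
    linarith
  rcases Int.eq_one_or_neg_one_of_mul_eq_one h2 with h3 | h3 <;> subst h3 <;> norm_num at h2

lemma golden_pow (n : ℕ) (hn : 1 ≤ n) :
    ∃ a b : ℚ, 0 < a ∧ 0 < b ∧ ((1 + Real.sqrt 5) / 2) ^ n = (a : ℝ) + b * Real.sqrt 5 := by
  induction n, hn using Nat.le_induction with
  | base => exact ⟨1/2, 1/2, by norm_num, by norm_num, by push_cast; ring⟩
  | succ k hk ih =>
    obtain ⟨a, b, ha, hb, h⟩ := ih
    refine ⟨(a + 5 * b) / 2, (a + b) / 2, by positivity, by positivity, ?_⟩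
    rw [pow_succ, h]
    have : Real.sqrt 5 * Real.sqrt 5 = 5 := Real.mul_self_sqrt (by norm_num)
    push_cast
    linear_combination (b / 2 : ℝ) * this

open Polynomial IntermediateField in
lemma sqrt_five_notMem (t : ℝ) (ht : t ^ 3 - t ^ 2 - t - 1 = 0) :
    Real.sqrt 5 ∉ ℚ⟮t⟯ := by
  intro hs
  have hm : (X ^ 3 - X ^ 2 - X - 1 : ℚ[X]).Monic := by monicity!
  have hd : (X ^ 3 - X ^ 2 - X - 1 : ℚ[X]).natDegree = 3 := by compute_degree!
  have hmin := minpoly.eq_of_irreducible_of_monic tri_irred (x := t) (by simpa using ht) hm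
  have hint : IsIntegral ℚ t := ⟨_, hm, by simpa [← aeval_def] using ht⟩
  have hfr := adjoin.finrank hint
  rw [← hmin, hd] at hfr
  have : FiniteDimensional ℚ ℚ⟮t⟯ := adjoin.finiteDimensional hint
  let s : ℚ⟮t⟯ := ⟨Real.sqrt 5, hs⟩
  have hss : s ^ 2 = 5 := by
    apply Subtype.ext
    change Real.sqrt 5 ^ 2 = 5
    exact Real.sq_sqrt (by norm_num)
  have hdv := minpoly.degree_dvd (K := ℚ) (L := ℚ⟮t⟯) (x := s) (IsIntegral.of_finite ℚ s)
  rw [hfr] at hdv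
  have hle : (minpoly ℚ s).natDegree ≤ 2 := by
    have h5 : (X ^ 2 - C 5 : ℚ[X]).natDegree = 2 := by compute_degree!
    have h0 : (X ^ 2 - C 5 : ℚ[X]) ≠ 0 := by
      intro h; rw [h] at h5; simp at h5
    rw [← h5]
    refine natDegree_le_of_dvd (minpoly.dvd ℚ s ?_) h0
    simp [hss]
  have h1 : (minpoly ℚ s).natDegree = 1 := by
    rcases (Nat.dvd_prime Nat.prime_three).1 hdv with h | h <;> omega
  obtain ⟨q, hq⟩ := minpoly.natDegree_eq_one_iff.1 h1
  have hirr : Irrational (Real.sqrt 5) := by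
    have := Nat.Prime.irrational_sqrt (p := 5) (by norm_num)
    exact_mod_cast this
  apply hirr
  refine ⟨q, ?_⟩
  have := congrArg (Subtype.val) hq
  simpa [s] using this

/-- For all positive integers `n`, `m`, we have `α^n ≠ √5·c_α·α_T^m`, i.e. the
quantity `(√5·c_α)⁻¹·α^n·α_T^(-m) - 1` never vanishes. -/
theorem phi_zero_ne_zero (α αT cα : ℝ)
    (hα : α = (1 + Real.sqrt 5) / 2)
    (hroot : αT ^ 3 - αT ^ 2 - αT - 1 = 0)
    (huniq : ∀ x : ℝ, x ^ 3 - x ^ 2 - x - 1 = 0 → x = αT)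
    (hcα : cα = 1 / (-αT ^ 2 + 4 * αT - 1))
    (n m : ℕ) (hn : 1 ≤ n) (hm : 1 ≤ m) :
    α ^ n ≠ Real.sqrt 5 * cα * αT ^ m := by
  intro h
  obtain ⟨a, b, ha, hb, hab⟩ := golden_pow n hn
  rw [hα, hab] at h
  apply sqrt_five_notMem αT hroot
  have ht : αT ∈ IntermediateField.adjoin ℚ {αT} := IntermediateField.mem_adjoin_simple_self ℚ αT
  set K := IntermediateField.adjoin ℚ {αT}
  have hq : ∀ q : ℚ, (q : ℝ) ∈ K := fun q => by simpa using K.algebraMap_mem q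
  have hc : cα ∈ K := by
    rw [hcα]
    have h4 : (4 : ℝ) ∈ K := by exact_mod_cast hq 4
    exact K.div_mem K.one_mem (K.sub_mem (K.add_mem (K.neg_mem (pow_mem ht 2))
      (K.mul_mem h4 ht)) K.one_mem)
  have h5 : (5 : ℝ) ∈ K := by exact_mod_cast hq 5
  have hs : Real.sqrt 5 * Real.sqrt 5 = 5 := Real.mul_self_sqrt (by norm_num)
  have ha' : (a : ℝ) ≠ 0 := by exact_mod_cast ha.ne'
  have key : Real.sqrt 5 = 5 * (cα * αT ^ m - b) / a := by
    rw [eq_div_iff ha']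
    linear_combination Real.sqrt 5 * h + (cα * αT ^ m - b) * hs
  rw [key]
  exact K.div_mem (K.mul_mem h5 (K.sub_mem (K.mul_mem hc (pow_mem ht m)) (hq b))) (hq a)
end

section
/- Let n and n₁ be integers with n > n₁ ≥ 2 and n ≥ 300, and let m ≥ 2 be an integer. Then α^n - α^{n₁} ≠ √5·c_α·α_T^m, where α = (1+√5)/2, α_T is the unique real root of x³ - x² - x - 1, and c_α = 1/(-α_T² + 4α_T - 1). -/
lemma aux_sep (u v : ℚ) (h : (u : ℝ) + v * Real.sqrt 5 = 0) : u = 0 ∧ v = 0 := by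
  have hirr : Irrational (Real.sqrt 5) := by
    have := Nat.Prime.irrational_sqrt (p := 5) (by norm_num)
    simpa using this
  have hv : v = 0 := by
    by_contra hv
    have hv' : (v : ℝ) ≠ 0 := by exact_mod_cast hv
    apply hirr
    refine ⟨-u / v, ?_⟩
    push_cast
    field_simp
    linarith
  subst hv
  simp at h
  exact ⟨h, rfl⟩

lemma sq5 : Real.sqrt 5 * Real.sqrt 5 = 5 := Real.mul_self_sqrt (by norm_num)

/-- The field `ℚ(√5)` inside the reals. -/
def K5 : Subfield ℝ where
  carrier := {x | ∃ r s : ℚ, x = r + s * Real.sqrt 5}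
  mul_mem' := by
    rintro _ _ ⟨a, b, rfl⟩ ⟨c, d, rfl⟩
    refine ⟨a * c + 5 * b * d, a * d + b * c, ?_⟩
    push_cast
    linear_combination (b * d : ℝ) * sq5
  one_mem' := ⟨1, 0, by simp⟩
  add_mem' := by
    rintro _ _ ⟨a, b, rfl⟩ ⟨c, d, rfl⟩
    exact ⟨a + c, b + d, by push_cast; ring⟩
  zero_mem' := ⟨0, 0, by simp⟩
  neg_mem' := by
    rintro _ ⟨a, b, rfl⟩
    exact ⟨-a, -b, by push_cast; ring⟩
  inv_mem' := by
    rintro _ ⟨a, b, rfl⟩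
    by_cases h : (a : ℝ) + b * Real.sqrt 5 = 0
    · exact ⟨0, 0, by simp [h]⟩
    have h2 : (a : ℝ) - b * Real.sqrt 5 ≠ 0 := by
      intro h3
      have := aux_sep a (-b) (by push_cast; linarith)
      obtain ⟨h4, h5⟩ := this
      have h6 : b = 0 := by linarith
      subst h4 h6
      simp at h
    have e : (a : ℝ) ^ 2 - 5 * b ^ 2 = (a + b * Real.sqrt 5) * (a - b * Real.sqrt 5) := by
      linear_combination (b ^ 2 : ℝ) * sq5
    have h3 : (a : ℝ) ^ 2 - 5 * b ^ 2 ≠ 0 := by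
      rw [e]; exact mul_ne_zero h h2
    refine ⟨a / (a ^ 2 - 5 * b ^ 2), -b / (a ^ 2 - 5 * b ^ 2), ?_⟩
    push_cast
    rw [inv_eq_iff_eq_inv, ← mul_eq_one_iff_eq_inv₀]
    · have e2 : ((a : ℝ) + b * Real.sqrt 5) *
          (a / (a ^ 2 - 5 * b ^ 2) + -b / (a ^ 2 - 5 * b ^ 2) * Real.sqrt 5)
          = ((a + b * Real.sqrt 5) * (a - b * Real.sqrt 5)) / (a ^ 2 - 5 * b ^ 2) := by ring
      rw [e2, ← e, div_self h3]
    · have : (a : ℝ) / (a ^ 2 - 5 * b ^ 2) + -b / (a ^ 2 - 5 * b ^ 2) * Real.sqrt 5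
        = (a - b * Real.sqrt 5) / (a ^ 2 - 5 * b ^ 2) := by ring
      rw [this]
      exact div_ne_zero h2 h3

lemma no_rat (r : ℚ) (h : r ^ 3 - r ^ 2 - r - 1 = 0) : False := by
  have hi : IsIntegral ℤ r := by
    refine ⟨Polynomial.X ^ 3 - Polynomial.X ^ 2 - Polynomial.X - 1, by monicity!, ?_⟩
    simpa using h
  obtain ⟨N, rfl⟩ := IsIntegrallyClosed.isIntegral_iff.mp hi
  have h1 : N ^ 3 - N ^ 2 - N - 1 = 0 := by
    simp at h
    exact_mod_cast h
  have h2 : N ∣ 1 := ⟨N ^ 2 - N - 1, by linarith⟩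
  rcases Int.isUnit_iff.mp (isUnit_of_dvd_one h2) with rfl | rfl <;> norm_num at h1

lemma not_mem (T : ℝ) (hroot : T ^ 3 - T ^ 2 - T - 1 = 0)
    (huniq : ∀ x : ℝ, x ^ 3 - x ^ 2 - x - 1 = 0 → x = T) : T ∉ K5 := by
  rintro ⟨r, s, hT⟩
  have h5 := sq5
  set w := Real.sqrt 5 with hw
  rw [hT] at hroot
  have key := aux_sep (r ^ 3 + 15 * r * s ^ 2 - r ^ 2 - 5 * s ^ 2 - r - 1)
    (3 * r ^ 2 * s + 5 * s ^ 3 - 2 * r * s - s) (by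
      push_cast
      rw [← hw]
      linear_combination hroot - (3 * r * s ^ 2 + s ^ 3 * w - s ^ 2 : ℝ) * h5)
  obtain ⟨k1, k2⟩ := key
  have k1' : (r : ℝ) ^ 3 + 15 * r * s ^ 2 - r ^ 2 - 5 * s ^ 2 - r - 1 = 0 := by exact_mod_cast k1
  have k2' : (3 : ℝ) * r ^ 2 * s + 5 * s ^ 3 - 2 * r * s - s = 0 := by exact_mod_cast k2
  have h := huniq (r - s * w) (by
    linear_combination k1' - w * k2' + (3 * r * s ^ 2 - s ^ 3 * w - s ^ 2 : ℝ) * h5)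
  have hs := aux_sep 0 s (by push_cast; rw [← hw]; linarith)
  obtain ⟨-, rfl⟩ := hs
  exact no_rat r (by simpa using k1)

lemma trib_s16 (T : ℝ) (hroot : T ^ 3 - T ^ 2 - T - 1 = 0) (k : ℕ) :
    ∃ x y z : ℕ, 1 ≤ x ∧ T ^ (k + 2) = x * T ^ 2 + y * T + z := by
  induction k with
  | zero => exact ⟨1, 0, 0, le_rfl, by simp⟩
  | succ k ih =>
    obtain ⟨x, y, z, hx, h⟩ := ih
    refine ⟨x + y, x + z, x, by omega, ?_⟩
    rw [show k + 1 + 2 = (k + 2) + 1 by ring, pow_succ, h]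
    push_cast
    linear_combination (x : ℝ) * hroot

/-- If `n > n₁ ≥ 2`, `n ≥ 300` and `m ≥ 2`, then
`α^n - α^(n₁) ≠ √5·c_α·α_T^m`. -/
theorem phi_one_ne_zero (α αT cα : ℝ)
    (hα : α = (1 + Real.sqrt 5) / 2)
    (hroot : αT ^ 3 - αT ^ 2 - αT - 1 = 0)
    (huniq : ∀ x : ℝ, x ^ 3 - x ^ 2 - x - 1 = 0 → x = αT)
    (hcα : cα = 1 / (-αT ^ 2 + 4 * αT - 1))
    (n n₁ m : ℕ) (hn₁ : 2 ≤ n₁) (hn : n₁ < n) (hn300 : 300 ≤ n) (hm : 2 ≤ m) :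
    α ^ n - α ^ n₁ ≠ Real.sqrt 5 * cα * αT ^ m := by
  intro heq
  have hnot := not_mem αT hroot huniq
  have hw0 : 0 < Real.sqrt 5 := Real.sqrt_pos.mpr (by norm_num)
  have hw1 : 1 < Real.sqrt 5 := by
    rw [Real.lt_sqrt] <;> norm_num
  have hα1 : 1 < α := by rw [hα]; linarith
  have hwK : Real.sqrt 5 ∈ K5 := ⟨0, 1, by simp⟩
  have hαK : α ∈ K5 := ⟨1 / 2, 1 / 2, by rw [hα]; push_cast; ring⟩
  obtain ⟨X, hX⟩ : ∃ X, X = (α ^ n - α ^ n₁) / Real.sqrt 5 := ⟨_, rfl⟩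
  have hXK : X ∈ K5 := by
    rw [hX]
    exact div_mem (sub_mem (pow_mem hαK _) (pow_mem hαK _)) hwK
  have hXpos : 0 < X := by
    rw [hX]
    exact div_pos (sub_pos.mpr (pow_lt_pow_right₀ hα1 hn)) hw0
  have hXe : X = cα * αT ^ m := by
    rw [hX, heq]; field_simp
  have hd : -αT ^ 2 + 4 * αT - 1 ≠ 0 := by
    intro h
    rw [hcα, h] at hXe
    simp at hXe
    linarith
  have hXm : αT ^ m = X * (-αT ^ 2 + 4 * αT - 1) := by
    rw [hXe, hcα, one_div, mul_right_comm, inv_mul_cancel₀ hd, one_mul]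
  obtain ⟨x, y, z, hx, ht⟩ := trib_s16 αT hroot (m - 2)
  rw [Nat.sub_add_cancel hm, hXm] at ht
  have hA : (x : ℝ) + X ≠ 0 := by positivity
  have nK : ∀ k : ℕ, (k : ℝ) ∈ K5 := fun k => natCast_mem K5 k
  obtain ⟨p, hp⟩ : ∃ p, p = (4 * X - y) / (x + X) := ⟨_, rfl⟩
  obtain ⟨q, hq⟩ : ∃ q, q = (-X - z) / (x + X) := ⟨_, rfl⟩
  have hAK : (x : ℝ) + X ∈ K5 := add_mem (nK x) hXK
  have hpK : p ∈ K5 := by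
    rw [hp]
    exact div_mem (sub_mem (mul_mem (by exact_mod_cast nK 4) hXK) (nK y)) hAK
  have hqK : q ∈ K5 := by
    rw [hq]
    exact div_mem (sub_mem (neg_mem hXK) (nK z)) hAK
  have hquad : αT ^ 2 = p * αT + q := by
    rw [hp, hq]; field_simp
    linarith
  have hlin : (p ^ 2 + q - p - 1) * αT = q + 1 - p * q := by
    linear_combination hroot - (αT + p - 1) * hquad
  by_cases hc : p ^ 2 + q - p - 1 = 0
  · rw [hc, zero_mul] at hlin
    have h1 := huniq (1 - p) (by
      linear_combination (1 - p) * hc + hlin)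
    apply hnot
    rw [← h1]
    exact sub_mem (one_mem _) hpK
  · apply hnot
    have : αT = (q + 1 - p * q) / (p ^ 2 + q - p - 1) := by
      field_simp
      linarith
    rw [this]
    exact div_mem (sub_mem (add_mem hqK (one_mem _)) (mul_mem hpK hqK))
      (sub_mem (sub_mem (add_mem (pow_mem hpK 2) hqK) hpK) (one_mem _))
end

section
/- For all positive integers n and all integers m > m₁ ≥ 1, α^n ≠ √5·c_α·(α_T^{m-m₁} - 1)·α_T^{m₁}, where α = (1+√5)/2, α_T is the unique real root of x³ - x² - x - 1, and c_α = 1/(-α_T² + 4α_T - 1). (Equivalently, α^{2n} ≠ 5·c_α²·α_T^{2m₁}·(α_T^{m-m₁} - 1)².) -/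
open Polynomial IntermediateField in
lemma sqrt5_not_mem (T : ℝ) (h : T ^ 3 - T ^ 2 - T - 1 = 0) :
    Real.sqrt 5 ∉ ℚ⟮T⟯ := by
  intro hmem
  have hirr5 : Irrational (Real.sqrt 5) := by
    have := Nat.Prime.irrational_sqrt (p := 5) (by norm_num)
    exact_mod_cast this
  have hdeg : (X ^ 3 - X ^ 2 - X - 1 : ℚ[X]).natDegree = 3 := by compute_degree!
  have hmonic : (X ^ 3 - X ^ 2 - X - 1 : ℚ[X]).Monic := by monicity!
  have hirr : Irreducible (X ^ 3 - X ^ 2 - X - 1 : ℚ[X]) := by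
    rw [hmonic.irreducible_iff_roots_eq_zero_of_degree_le_three (by omega) (by omega)]
    rw [Multiset.eq_zero_iff_forall_notMem]
    intro q hq
    have hq := isRoot_of_mem_roots hq
    have hmz : (X ^ 3 - X ^ 2 - X - 1 : ℤ[X]).Monic := by monicity!
    obtain ⟨z, hz, -⟩ := exists_integer_of_is_root_of_monic (K := ℚ) (r := q) hmz (by
      simpa [IsRoot.def] using hq)
    simp only [IsRoot.def, eval_sub, eval_pow, eval_X, eval_one] at hq
    rw [hz] at hq
    have hz' : z ^ 3 - z ^ 2 - z - 1 = 0 := by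
      have : ((z : ℚ)) ^ 3 - (z : ℚ) ^ 2 - z - 1 = 0 := by simpa using hq
      exact_mod_cast this
    have hu : IsUnit z := IsUnit.of_mul_eq_one (z ^ 2 - z - 1) (by linarith)
    rcases Int.isUnit_iff.1 hu with rfl | rfl <;> norm_num at hz'
  have hmin : minpoly ℚ T = X ^ 3 - X ^ 2 - X - 1 :=
    (minpoly.eq_of_irreducible_of_monic hirr (by simpa using h) hmonic).symm
  have hint : IsIntegral ℚ T := ⟨_, hmonic, by simpa using h⟩
  have hfin : Module.finrank ℚ ℚ⟮T⟯ = 3 := by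
    rw [IntermediateField.adjoin.finrank hint, hmin, hdeg]
  haveI : FiniteDimensional ℚ ℚ⟮T⟯ := IntermediateField.adjoin.finiteDimensional hint
  let s : ℚ⟮T⟯ := ⟨Real.sqrt 5, hmem⟩
  have hs : s ^ 2 = 5 := by
    apply Subtype.ext
    simp [s]
    rfl
  have hdvd : (minpoly ℚ s).natDegree ∣ 3 := hfin ▸ minpoly.degree_dvd (Algebra.IsIntegral.isIntegral s)
  have hle : (minpoly ℚ s).natDegree ≤ 2 := by
    have hm2 : (X ^ 2 - 5 : ℚ[X]).Monic := by monicity!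
    have hd2 : (X ^ 2 - 5 : ℚ[X]).natDegree = 2 := by compute_degree!
    rw [← hd2]
    refine natDegree_le_of_dvd (minpoly.dvd ℚ s ?_) hm2.ne_zero
    rw [map_sub, map_pow, aeval_X, hs, map_ofNat, sub_self]
  have h1 : (minpoly ℚ s).natDegree = 1 := by
    rcases (Nat.dvd_prime Nat.prime_three).1 hdvd with h | h <;> omega
  obtain ⟨q, hq⟩ := minpoly.natDegree_eq_one_iff.1 h1
  apply hirr5
  refine ⟨q, ?_⟩
  have := congrArg (Subtype.val) hq
  simpa [s] using this

lemma alpha_pow_form (n : ℕ) : ∃ a b : ℚ, 0 < a ∧ 0 ≤ b ∧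
    ((1 + Real.sqrt 5) / 2) ^ n = (a : ℝ) + b * Real.sqrt 5 := by
  induction n with
  | zero => exact ⟨1, 0, by norm_num, le_rfl, by simp⟩
  | succ k ih =>
    obtain ⟨a, b, ha, hb, h⟩ := ih
    refine ⟨(a + 5 * b) / 2, (a + b) / 2, by positivity, by positivity, ?_⟩
    rw [pow_succ, h]
    have h5 : Real.sqrt 5 ^ 2 = 5 := Real.sq_sqrt (by norm_num)
    push_cast
    linear_combination (b : ℝ) / 2 * h5

/-- For all positive `n` and all `m > m₁ ≥ 1`, we have
`α^n ≠ √5·c_α·(α_T^(m-m₁) - 1)·α_T^(m₁)`. -/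
theorem phi_two_ne_zero (α αT cα : ℝ)
    (hα : α = (1 + Real.sqrt 5) / 2)
    (hroot : αT ^ 3 - αT ^ 2 - αT - 1 = 0)
    (huniq : ∀ x : ℝ, x ^ 3 - x ^ 2 - x - 1 = 0 → x = αT)
    (hcα : cα = 1 / (-αT ^ 2 + 4 * αT - 1))
    (n m m₁ : ℕ) (hn : 1 ≤ n) (hm₁ : 1 ≤ m₁) (hm : m₁ < m) :
    α ^ n ≠ Real.sqrt 5 * cα * (αT ^ (m - m₁) - 1) * αT ^ m₁ := by
  intro heq
  obtain ⟨a, b, ha, hb, h⟩ := alpha_pow_form n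
  rw [hα, h] at heq
  apply sqrt5_not_mem αT hroot
  set K := IntermediateField.adjoin ℚ {αT} with hK
  have hT : αT ∈ K := IntermediateField.mem_adjoin_simple_self ℚ αT
  have hQ : ∀ q : ℚ, (q : ℝ) ∈ K := fun q => by
    simpa using K.algebraMap_mem q
  have h4 : (4 : ℝ) ∈ K := by simpa using hQ 4
  have hc : cα ∈ K := by
    rw [hcα]
    exact K.div_mem K.one_mem (K.sub_mem (K.add_mem (K.neg_mem (pow_mem hT 2))
      (K.mul_mem h4 hT)) K.one_mem)
  have hr : cα * (αT ^ (m - m₁) - 1) * αT ^ m₁ ∈ K :=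
    K.mul_mem (K.mul_mem hc (K.sub_mem (pow_mem hT _) K.one_mem)) (pow_mem hT _)
  set r := cα * (αT ^ (m - m₁) - 1) * αT ^ m₁ with hrdef
  have e : Real.sqrt 5 * (r - b) = a := by rw [hrdef]; linarith
  have ha' : (a : ℝ) ≠ 0 := by exact_mod_cast ha.ne'
  have hne : r - b ≠ 0 := by
    intro h0
    rw [h0, mul_zero] at e
    exact ha' e.symm
  rw [(eq_div_iff hne).2 e]
  exact K.div_mem (hQ a) (K.sub_mem hr (hQ b))
end
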